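/- Let μ be a regular cardinal and let M, N be transitive models of ZFC⁻ such that o(M) = o(N) = μ⁺ and μ is the largest cardinal of M. Suppose π : M → N is elementary and π is continuous at μ. Then the set of fixed points of π is a member of the μ-club filter C_{μ,μ⁺} on μ⁺. -/

import Mathlib

/- ## A framework for transitive class/set models of fragments of ZFC,
     inside the universe `ZFSet` of ZF sets. -/

open FirstOrder FirstOrder.Language

/-- The language of set theory: a single binary relation symbol `∈`. -/
inductive SetLRel : ℕ → Type
  | mem : SetLRel 2

/-- The first-order language of set theory. -/
def setL : FirstOrder.Language := ⟨fun _ => Empty, SetLRel⟩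

/-- Evaluation of a term of the language of set theory (terms are just variables). -/
def tval {n : ℕ} (v : Fin n → ZFSet) : setL.Term (Empty ⊕ Fin n) → ZFSet
  | .var (Sum.inl e) => e.elim
  | .var (Sum.inr i) => v i
  | .func f _ => f.elim

/-- Tarskian satisfaction of a formula of the language of set theory in a class `S` of
ZF-sets (equipped with true membership), under the assignment `v`. -/
def ZSat (S : Set ZFSet) : ∀ {n : ℕ}, setL.BoundedFormula Empty n → (Fin n → ZFSet) → Prop
  | _, .falsum, _ => False
  | _, .equal t u, v => tval v t = tval v u
  | _, .rel R ts, v =>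
      match R with
      | SetLRel.mem => tval v (ts 0) ∈ tval v (ts 1)
  | _, .imp φ ψ, v => ZSat S φ v → ZSat S ψ v
  | _, .all φ, v => ∀ x ∈ S, ZSat S φ (Fin.snoc v x)

/-- Satisfaction of a sentence in a class of ZF-sets. -/
def SatS (S : Set ZFSet) (σ : setL.Sentence) : Prop := ZSat S σ finZeroElim

/-- A class of ZF-sets is transitive. -/
def IsTransClass (S : Set ZFSet) : Prop := ∀ x ∈ S, ∀ y ∈ x, y ∈ S

/-- `r` is a well-ordering of the set `x`, from the point of view of the class `S`
(Kuratowski pairs code the relation; minimality is required for nonempty subsets of `x`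
lying in `S`). -/
def WellOrders (S : Set ZFSet) (r x : ZFSet) : Prop :=
  (∀ a ∈ x, ZFSet.pair a a ∉ r) ∧
  (∀ a ∈ x, ∀ b ∈ x, ∀ c ∈ x, ZFSet.pair a b ∈ r → ZFSet.pair b c ∈ r → ZFSet.pair a c ∈ r) ∧
  (∀ a ∈ x, ∀ b ∈ x, a ≠ b → (ZFSet.pair a b ∈ r ∨ ZFSet.pair b a ∈ r)) ∧
  (∀ y ∈ S, (∀ z ∈ y, z ∈ x) → y ≠ ∅ → ∃ m ∈ y, ∀ z ∈ y, ZFSet.pair z m ∉ r)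

/-- `S` is a transitive model of ZFC⁻, i.e. of ZFC stated with the Replacement Scheme and
the Well-Ordering Theorem but without the Power Set Axiom.  (Extensionality and Foundation
are automatic for transitive classes of ZF-sets.) -/
def ModelsZFCminus (S : Set ZFSet) : Prop :=
  IsTransClass S ∧
  (∅ : ZFSet) ∈ S ∧
  (∀ x ∈ S, ∀ y ∈ S, ({x, y} : ZFSet) ∈ S) ∧
  (∀ x ∈ S, (ZFSet.sUnion x : ZFSet) ∈ S) ∧
  ZFSet.omega ∈ S ∧
  (∀ (n : ℕ) (φ : setL.BoundedFormula Empty (n + 1)) (p : Fin n → ZFSet),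
    (∀ i, p i ∈ S) → ∀ a ∈ S, ∃ b ∈ S, ∀ y, y ∈ b ↔ (y ∈ a ∧ ZSat S φ (Fin.snoc p y))) ∧
  (∀ (n : ℕ) (φ : setL.BoundedFormula Empty (n + 2)) (p : Fin n → ZFSet),
    (∀ i, p i ∈ S) → ∀ a ∈ S,
      (∀ x ∈ a, ∃! y, y ∈ S ∧ ZSat S φ (Fin.snoc (Fin.snoc p x) y)) →
      ∃ b ∈ S, ∀ y, y ∈ b ↔ ∃ x ∈ a, y ∈ S ∧ ZSat S φ (Fin.snoc (Fin.snoc p x) y)) ∧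
  (∀ x ∈ S, ∃ r ∈ S, WellOrders S r x)

/-- `S` is a transitive model of ZFC. -/
def ModelsZFC (S : Set ZFSet) : Prop :=
  ModelsZFCminus S ∧ ∀ x ∈ S, ∃ p ∈ S, ∀ y, y ∈ p ↔ (y ∈ S ∧ y ⊆ x)

/-- `f` is (the graph of) a surjection of `a` onto `b`. -/
def SurjFun (f a b : ZFSet) : Prop :=
  ZFSet.IsFunc a b f ∧ ∀ y ∈ b, ∃ x ∈ a, ZFSet.pair x y ∈ f

/-- `f` is (the graph of) an injection of `a` into `b`. -/
def InjFun (f a b : ZFSet) : Prop :=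
  ZFSet.IsFunc a b f ∧ ∀ x ∈ a, ∀ x' ∈ a, ∀ y, ZFSet.pair x y ∈ f → ZFSet.pair x' y ∈ f → x = x'

/-- `f` is (the graph of) a cofinal function from `β` into the ordinal `α`. -/
def CofinalFun (f β α : ZFSet) : Prop :=
  ZFSet.IsFunc β α f ∧ ∀ ξ ∈ α, ∃ η ∈ β, ∃ ζ, ZFSet.pair η ζ ∈ f ∧ (ξ ∈ ζ ∨ ξ = ζ)

/-- `μ = cof(α)` as computed inside the class `S` (for `S = Set.univ`, the true cofinality). -/
def IsCofOf (S : Set ZFSet) (α μ : ZFSet) : Prop :=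
  μ ∈ S ∧ μ.IsOrdinal ∧ (∃ f ∈ S, CofinalFun f μ α) ∧
  ∀ ν ∈ S, ZFSet.IsOrdinal ν → (∃ f ∈ S, CofinalFun f ν α) → μ ⊆ ν

/-- `κ` is a cardinal from the point of view of the class `S`
(for `S = Set.univ`, a true cardinal). -/
def IsCardIn (S : Set ZFSet) (κ : ZFSet) : Prop :=
  κ.IsOrdinal ∧ ∀ α ∈ κ, ∀ f ∈ S, ¬ SurjFun f α κ

/-- `μ` is an (infinite) regular cardinal from the point of view of the class `S`. -/
def IsRegularIn (S : Set ZFSet) (μ : ZFSet) : Prop :=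
  ZFSet.omega ⊆ μ ∧ IsCardIn S μ ∧ IsCofOf S μ μ

/-- `ν = μ⁺`, the cardinal successor of `μ`, as computed in the class `S`. -/
def CardSuccIn (S : Set ZFSet) (μ ν : ZFSet) : Prop :=
  ν ∈ S ∧ IsCardIn S ν ∧ μ ∈ ν ∧ ∀ ξ ∈ S, IsCardIn S ξ → μ ∈ ξ → ν ⊆ ξ

/-- `μ` is the largest cardinal of the model `S`. -/
def IsLargestCardIn (S : Set ZFSet) (μ : ZFSet) : Prop :=
  μ ∈ S ∧ IsCardIn S μ ∧ ∀ x ∈ S, IsCardIn S x → x ⊆ μ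

/-- `α = sup A`, for `A` a collection of ordinals: `α` is the least ordinal above all of them. -/
def IsSupOf (α : ZFSet) (A : Set ZFSet) : Prop :=
  α.IsOrdinal ∧ (∀ a ∈ A, a ⊆ α) ∧ ∀ β : ZFSet, β.IsOrdinal → (∀ a ∈ A, a ⊆ β) → α ⊆ β

/-- `π` is an elementary embedding (for the language of set theory) from the class `S`
into the class `T`. -/
def IsElem (S T : Set ZFSet) (π : ZFSet → ZFSet) : Prop :=
  (∀ x ∈ S, π x ∈ T) ∧
  ∀ (n : ℕ) (φ : setL.BoundedFormula Empty n) (v : Fin n → ZFSet),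
    (∀ i, v i ∈ S) → (ZSat S φ v ↔ ZSat T φ (fun i => π (v i)))

/-- `C` is a `μ`-club in `ν = μ⁺`: a cofinal subset of `ν` closed under (suprema of)
increasing `μ`-sequences. -/
def MuClub (μ ν : ZFSet) (C : Set ZFSet) : Prop :=
  (∀ x ∈ C, x ∈ ν) ∧
  (∀ β ∈ ν, ∃ γ ∈ C, β ∈ γ ∨ β = γ) ∧
  (∀ s : ZFSet → ZFSet,
    (∀ ξ ∈ μ, s ξ ∈ C) →
    (∀ ξ η : ZFSet, ξ ∈ η → η ∈ μ → s ξ ∈ s η) →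
    ∀ γ ∈ ν, IsSupOf γ {y | ∃ ξ ∈ μ, y = s ξ} → γ ∈ C)

/-- The `μ`-club filter `C_{μ,μ⁺}` on `ν = μ⁺`: the filter generated by the cofinal subsets
of `ν` which are closed under increasing `μ`-sequences. -/
def muClubFilter (μ ν : ZFSet) : Filter ZFSet := Filter.generate {C | MuClub μ ν C}

universe u

/-- Uniformly Δ₀-definable predicates over transitive classes. -/
def DDef {n : ℕ} (P : (Fin n → ZFSet.{u}) → Prop) : Prop :=
  ∃ φ : setL.BoundedFormula Empty n, ∀ S : Set ZFSet.{u}, IsTransClass S →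
    ∀ v : Fin n → ZFSet.{u}, (∀ i, v i ∈ S) → (ZSat S φ v ↔ P v)

theorem DDef.congr {n : ℕ} {P Q : (Fin n → ZFSet.{u}) → Prop} (h : DDef P) (e : ∀ v, Q v ↔ P v) :
    DDef Q := by
  have : Q = P := funext fun v => propext (e v)
  rwa [this]

theorem DDef.mem {n : ℕ} (i j : Fin n) : DDef (fun v : Fin n → ZFSet.{u} => v i ∈ v j) := by
  refine ⟨.rel (L := setL) (l := 2) SetLRel.mem ![.var (Sum.inr i), .var (Sum.inr j)], ?_⟩
  intro S hS v hv
  simp [ZSat, tval]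

theorem DDef.eq {n : ℕ} (i j : Fin n) : DDef (fun v : Fin n → ZFSet.{u} => v i = v j) := by
  refine ⟨.equal (.var (Sum.inr i)) (.var (Sum.inr j)), ?_⟩
  intro S hS v hv
  simp [ZSat, tval]

theorem DDef.imp {n : ℕ} {P Q : (Fin n → ZFSet.{u}) → Prop} (hP : DDef P) (hQ : DDef Q) :
    DDef (fun v => P v → Q v) := by
  obtain ⟨φ, hφ⟩ := hP
  obtain ⟨ψ, hψ⟩ := hQ
  refine ⟨.imp φ ψ, fun S hS v hv => ?_⟩
  simp only [ZSat]
  rw [hφ S hS v hv, hψ S hS v hv]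

theorem DDef.false {n : ℕ} : DDef (fun _ : Fin n → ZFSet.{u} => False) :=
  ⟨.falsum, fun S hS v hv => by simp [ZSat]⟩

theorem DDef.not {n : ℕ} {P : (Fin n → ZFSet.{u}) → Prop} (hP : DDef P) :
    DDef (fun v => ¬ P v) := (hP.imp DDef.false).congr fun v => Iff.rfl

theorem DDef.or {n : ℕ} {P Q : (Fin n → ZFSet.{u}) → Prop} (hP : DDef P) (hQ : DDef Q) :
    DDef (fun v => P v ∨ Q v) := (hP.not.imp hQ).congr fun v => by tauto

theorem DDef.and {n : ℕ} {P Q : (Fin n → ZFSet.{u}) → Prop} (hP : DDef P) (hQ : DDef Q) :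
    DDef (fun v => P v ∧ Q v) := (hP.imp hQ.not).not.congr fun v => by tauto

theorem DDef.ball {n : ℕ} (i : Fin n) {Q : (Fin n → ZFSet.{u}) → ZFSet.{u} → Prop}
    (hQ : DDef (fun w : Fin (n+1) → ZFSet.{u} => Q (fun k => w k.castSucc) (w (Fin.last n)))) :
    DDef (fun v => ∀ x ∈ v i, Q v x) := by
  obtain ⟨φ, hφ⟩ := (DDef.mem (Fin.last n) i.castSucc).imp hQ
  refine ⟨.all φ, fun S hS v hv => ?_⟩
  simp only [ZSat]
  have key : ∀ x ∈ S, (ZSat S φ (Fin.snoc v x) ↔ (x ∈ v i → Q v x)) := by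
    intro x hx
    rw [hφ S hS]
    · simp
    · intro k
      refine Fin.lastCases ?_ (fun k => ?_) k
      · simpa using hx
      · simpa using hv k
  constructor
  · intro h x hx
    have hxS : x ∈ S := hS _ (hv i) _ hx
    exact (key x hxS).1 (h x hxS) hx
  · intro h x hx
    exact (key x hx).2 (h x)

theorem DDef.bex {n : ℕ} (i : Fin n) {Q : (Fin n → ZFSet.{u}) → ZFSet.{u} → Prop}
    (hQ : DDef (fun w : Fin (n+1) → ZFSet.{u} => Q (fun k => w k.castSucc) (w (Fin.last n)))) :
    DDef (fun v => ∃ x ∈ v i, Q v x) :=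
  (DDef.ball (Q := fun v x => ¬ Q v x) i hQ.not).not.congr fun v => by push Not; rfl

theorem DDef.isUPair {n : ℕ} (i j k : Fin n) :
    DDef (fun v : Fin n → ZFSet.{u} => v i = ({v j, v k} : ZFSet.{u})) := by
  refine ((DDef.mem j i).and ((DDef.mem k i).and
    (DDef.ball (Q := fun v x => x = v j ∨ x = v k) i
      ((DDef.eq (Fin.last n) j.castSucc).or (DDef.eq (Fin.last n) k.castSucc))))).congr ?_
  intro v
  constructor
  · intro h; rw [h]; simp
  · rintro ⟨h1, h2, h3⟩
    ext z
    rw [ZFSet.mem_pair]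
    constructor
    · exact h3 z
    · rintro (rfl | rfl) <;> assumption

theorem DDef.isPair {n : ℕ} (i j k : Fin n) :
    DDef (fun v : Fin n → ZFSet.{u} => v i = ZFSet.pair (v j) (v k)) := by
  refine ((DDef.bex (Q := fun v x => x = {v j, v j}) i
      (DDef.isUPair (Fin.last n) j.castSucc j.castSucc)).and
    ((DDef.bex (Q := fun v x => x = {v j, v k}) i
      (DDef.isUPair (Fin.last n) j.castSucc k.castSucc)).and
    (DDef.ball (Q := fun v x => x = {v j, v j} ∨ x = {v j, v k}) i
      ((DDef.isUPair (Fin.last n) j.castSucc j.castSucc).or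
       (DDef.isUPair (Fin.last n) j.castSucc k.castSucc))))).congr ?_
  intro v
  have hs : ({v j, v j} : ZFSet.{u}) = {v j} := by ext; simp
  simp only [hs]
  constructor
  · intro h; rw [h]; simp [ZFSet.pair]
  · rintro ⟨⟨_, h1, rfl⟩, ⟨_, h2, rfl⟩, h3⟩
    ext z
    rw [ZFSet.pair, ZFSet.mem_pair]
    constructor
    · exact h3 z
    · rintro (rfl | rfl) <;> assumption

theorem DDef.pairMem {n : ℕ} (j k i : Fin n) :
    DDef (fun v : Fin n → ZFSet.{u} => ZFSet.pair (v j) (v k) ∈ v i) :=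
  (DDef.bex (Q := fun v x => x = ZFSet.pair (v j) (v k)) i
    (DDef.isPair (Fin.last n) j.castSucc k.castSucc)).congr fun v => by simp

theorem DDef.isTransitive {n : ℕ} (i : Fin n) :
    DDef (fun v : Fin n → ZFSet.{u} => (v i).IsTransitive) :=
  (DDef.ball (Q := fun v x => ∀ y ∈ x, y ∈ v i) i
    (DDef.ball (Q := fun v y => y ∈ v i.castSucc) (Fin.last n)
      (DDef.mem (Fin.last _) i.castSucc.castSucc))).congr fun v => by
        simp only [ZFSet.IsTransitive, ZFSet.subset_def]

theorem DDef.isOrdinal :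
    DDef (fun v : Fin 1 → ZFSet.{u} => (v 0).IsOrdinal) :=
  ((DDef.isTransitive 0).and (DDef.ball (Q := fun v x => x.IsTransitive) 0
    (DDef.isTransitive (Fin.last 1)))).congr fun v =>
      ZFSet.isOrdinal_iff_forall_mem_isTransitive

theorem DDef.elem {n : ℕ} {P : (Fin n → ZFSet.{u}) → Prop} (hP : DDef P) {S T : Set ZFSet.{u}}
    (hS : IsTransClass S) (hT : IsTransClass T) {π : ZFSet.{u} → ZFSet.{u}} (hπ : IsElem S T π)
    (v : Fin n → ZFSet.{u}) (hv : ∀ i, v i ∈ S) : P v ↔ P (fun i => π (v i)) := by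
  obtain ⟨φ, hφ⟩ := hP
  rw [← hφ S hS v hv, hπ.2 n φ v hv, hφ T hT _ (fun i => hπ.1 _ (hv i))]

/-- Composition of functions inside the model. -/
theorem comp_mem {S : Set ZFSet.{u}} (hS : ModelsZFCminus S) {a b c f g : ZFSet.{u}}
    (ha : a ∈ S) (hb : b ∈ S) (hc : c ∈ S) (hf : f ∈ S) (hg : g ∈ S)
    (hgs : SurjFun g a b) (hfs : SurjFun f b c) : ∃ h ∈ S, SurjFun h a c := by
  obtain ⟨htr, -, hpair, -, -, -, hrep, -⟩ := hS
  have hpairS : ∀ x ∈ S, ∀ y ∈ S, ZFSet.pair x y ∈ S := by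
    intro x hx y hy
    have hs : ({x, x} : ZFSet.{u}) = {x} := by ext; simp
    rw [ZFSet.pair, ← hs]
    exact hpair _ (hpair _ hx _ hx) _ (hpair _ hx _ hy)
  -- variables : 0 = b, 1 = c, 2 = f, 3 = g, 4 = x, 5 = y, 6 = w, 7 = z
  obtain ⟨φ, hφ⟩ : DDef (fun v : Fin 6 → ZFSet.{u} => ∃ w ∈ v 0, ∃ z ∈ v 1,
      v 5 = ZFSet.pair (v 4) z ∧ ZFSet.pair (v 4) w ∈ v 3 ∧ ZFSet.pair w z ∈ v 2) :=
    DDef.bex (Q := fun v w => ∃ z ∈ v 1,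
      v 5 = ZFSet.pair (v 4) z ∧ ZFSet.pair (v 4) w ∈ v 3 ∧ ZFSet.pair w z ∈ v 2) 0
      (DDef.bex (Q := fun v z =>
        v 5 = ZFSet.pair (v 4) z ∧ ZFSet.pair (v 4) (v 6) ∈ v 3 ∧ ZFSet.pair (v 6) z ∈ v 2) 1
        ((DDef.isPair (n := 8) 5 4 7).and ((DDef.pairMem (n := 8) 4 6 3).and
          (DDef.pairMem (n := 8) 6 7 2))))
  have hφ' : ∀ x ∈ S, ∀ y ∈ S, (ZSat S φ (Fin.snoc (Fin.snoc ![b, c, f, g] x) y) ↔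
      ∃ w ∈ b, ∃ z ∈ c, y = ZFSet.pair x z ∧ ZFSet.pair x w ∈ g ∧ ZFSet.pair w z ∈ f) := by
    intro x hx y hy
    have hv : (Fin.snoc (Fin.snoc ![b, c, f, g] x : Fin 5 → ZFSet.{u}) y : Fin 6 → ZFSet.{u})
        = ![b, c, f, g, x, y] := by
      funext i; fin_cases i <;> rfl
    rw [hv, hφ S htr]
    · rfl
    · intro i; fin_cases i <;> assumption
  obtain ⟨h, hhS, hh⟩ := hrep 4 φ ![b, c, f, g]
    (by intro i; fin_cases i <;> assumption) a ha (by
      intro x hx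
      have hxS := htr _ ha _ hx
      obtain ⟨w, hw, hwu⟩ := hgs.1.2 x hx
      have hwb : w ∈ b := (ZFSet.pair_mem_prod.1 (hgs.1.1 hw)).2
      obtain ⟨z, hz, hzu⟩ := hfs.1.2 w hwb
      have hzc : z ∈ c := (ZFSet.pair_mem_prod.1 (hfs.1.1 hz)).2
      have hpS := hpairS x hxS z (htr _ hc _ hzc)
      refine ⟨ZFSet.pair x z, ⟨hpS, (hφ' x hxS _ hpS).2 ⟨w, hwb, z, hzc, rfl, hw, hz⟩⟩, ?_⟩
      rintro y ⟨hyS, hy⟩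
      obtain ⟨w', hw', z', hz', rfl, h1, h2⟩ := (hφ' x hxS y hyS).1 hy
      obtain rfl := hwu w' h1
      obtain rfl := hzu z' h2
      rfl)
  have hh' : ∀ y, y ∈ h ↔ ∃ x ∈ a, ∃ w ∈ b, ∃ z ∈ c,
      y = ZFSet.pair x z ∧ ZFSet.pair x w ∈ g ∧ ZFSet.pair w z ∈ f := by
    intro y
    rw [hh]
    constructor
    · rintro ⟨x, hx, hy, h⟩
      exact ⟨x, hx, (hφ' x (htr _ ha _ hx) y hy).1 h⟩
    · rintro ⟨x, hx, h⟩
      have hy : y ∈ S := by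
        obtain ⟨w', hw', z', hz', rfl, h1, h2⟩ := h
        exact hpairS _ (htr _ ha _ hx) _ (htr _ hc _ hz')
      exact ⟨x, hx, hy, (hφ' x (htr _ ha _ hx) y hy).2 h⟩
  refine ⟨h, hhS, ⟨?_, ?_⟩, ?_⟩
  · intro y hy
    obtain ⟨x, hx, w', hw', z', hz', rfl, h1, h2⟩ := (hh' y).1 hy
    exact ZFSet.pair_mem_prod.2 ⟨hx, hz'⟩
  · intro x hx
    obtain ⟨w, hw, hwu⟩ := hgs.1.2 x hx
    have hwb : w ∈ b := (ZFSet.pair_mem_prod.1 (hgs.1.1 hw)).2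
    obtain ⟨z, hz, hzu⟩ := hfs.1.2 w hwb
    have hzc : z ∈ c := (ZFSet.pair_mem_prod.1 (hfs.1.1 hz)).2
    refine ⟨z, (hh' _).2 ⟨x, hx, w, hwb, z, hzc, rfl, hw, hz⟩, ?_⟩
    intro z' hz'
    obtain ⟨x1, hx1, w', hw', z1, hz1, he, h1, h2⟩ := (hh' _).1 hz'
    obtain ⟨rfl, rfl⟩ := ZFSet.pair_inj.1 he
    obtain rfl := hwu w' h1
    exact hzu _ h2
  · intro z hz
    obtain ⟨w, hw, hwz⟩ := hfs.2 z hz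
    obtain ⟨x, hx, hxw⟩ := hgs.2 w hw
    exact ⟨x, hx, (hh' _).2 ⟨x, hx, w, hw, z, hz, rfl, hxw, hwz⟩⟩

theorem id_surj (a : ZFSet.{u}) {S : Set ZFSet.{u}} (hS : ModelsZFCminus S) (ha : a ∈ S) :
    ∃ f ∈ S, SurjFun f a a := by
  obtain ⟨htr, -, hpair, -, -, -, hrep, -⟩ := hS
  have hpairS : ∀ x ∈ S, ∀ y ∈ S, ZFSet.pair x y ∈ S := by
    intro x hx y hy
    have hs : ({x, x} : ZFSet.{u}) = {x} := by ext; simp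
    rw [ZFSet.pair, ← hs]
    exact hpair _ (hpair _ hx _ hx) _ (hpair _ hx _ hy)
  obtain ⟨φ, hφ⟩ : DDef (fun v : Fin 2 → ZFSet.{u} => v 1 = ZFSet.pair (v 0) (v 0)) :=
    DDef.isPair (n := 2) 1 0 0
  have hφ' : ∀ x ∈ S, ∀ y ∈ S, (ZSat S φ (Fin.snoc (Fin.snoc ![] x) y) ↔
      y = ZFSet.pair x x) := by
    intro x hx y hy
    have hv : (Fin.snoc (Fin.snoc ![] x : Fin 1 → ZFSet.{u}) y : Fin 2 → ZFSet.{u})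
        = ![x, y] := by
      funext i; fin_cases i <;> rfl
    rw [hv, hφ S htr]
    · rfl
    · intro i; fin_cases i <;> assumption
  obtain ⟨h, hhS, hh⟩ := hrep 0 φ ![]
    (by intro i; exact i.elim0) a ha (by
      intro x hx
      have hxS := htr _ ha _ hx
      have hpS := hpairS x hxS x hxS
      refine ⟨ZFSet.pair x x, ⟨hpS, (hφ' x hxS _ hpS).2 rfl⟩, ?_⟩
      rintro y ⟨hyS, hy⟩
      exact (hφ' x hxS y hyS).1 hy)
  have hh' : ∀ y, y ∈ h ↔ ∃ x ∈ a, y = ZFSet.pair x x := by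
    intro y
    rw [hh]
    constructor
    · rintro ⟨x, hx, hy, h⟩
      exact ⟨x, hx, (hφ' x (htr _ ha _ hx) y hy).1 h⟩
    · rintro ⟨x, hx, h⟩
      have hy : y ∈ S := by
        rw [h]
        exact hpairS _ (htr _ ha _ hx) _ (htr _ ha _ hx)
      exact ⟨x, hx, hy, (hφ' x (htr _ ha _ hx) y hy).2 h⟩
  refine ⟨h, hhS, ⟨?_, ?_⟩, ?_⟩
  · intro y hy
    obtain ⟨x, hx, rfl⟩ := (hh' y).1 hy
    exact ZFSet.pair_mem_prod.2 ⟨hx, hx⟩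
  · intro x hx
    refine ⟨x, (hh' _).2 ⟨x, hx, rfl⟩, ?_⟩
    intro z' hz'
    obtain ⟨x1, hx1, he⟩ := (hh' _).1 hz'
    obtain ⟨rfl, rfl⟩ := ZFSet.pair_inj.1 he
    rfl
  · intro z hz
    exact ⟨z, hz, (hh' _).2 ⟨z, hz, rfl⟩⟩

/-- In `M`, every ordinal is the surjective image of a subset of `μ`. -/
theorem exists_surj {M μ γ : ZFSet.{u}} (hM : ModelsZFCminus M.toSet)
    (hlc : IsLargestCardIn M.toSet μ) (hγ : γ ∈ M) (hγo : γ.IsOrdinal) :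
    ∃ f ∈ M, ∃ α, α ⊆ μ ∧ SurjFun f α γ := by
  have hne : {α : ZFSet.{u} | α ∈ M ∧ α.IsOrdinal ∧ ∃ f ∈ M, SurjFun f α γ}.Nonempty :=
    ⟨γ, hγ, hγo, id_surj γ hM hγ⟩
  obtain ⟨α, ⟨hαM, hαo, f, hf, hfs⟩, hmin⟩ := ZFSet.mem_wf.has_min _ hne
  refine ⟨f, hf, α, hlc.2.2 α hαM ⟨hαo, ?_⟩, hfs⟩
  intro δ hδ g hg hgs
  have hδM : δ ∈ M := hM.1 _ hαM _ hδ
  exact hmin δ ⟨hδM, hαo.mem hδ, comp_mem hM hδM hαM hγ hf hg hgs hfs⟩ hδ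

theorem reg_bound {μ : ZFSet.{u}} (hμ : IsRegularIn Set.univ μ) {β : ZFSet.{u}} (hβ : β ∈ μ)
    (g : ZFSet.{u} → ZFSet.{u}) (hg : ∀ η ∈ β, g η ∈ μ) : ∃ ξ ∈ μ, ∀ η ∈ β, g η ∈ ξ := by
  classical
  by_contra hcon
  push Not at hcon
  have hμo := hμ.2.1.1
  letI : ZFSet.Definable₁ g := Classical.allZFSetDefinable _
  have := hμ.2.2.2.2.2 β trivial (hμo.mem hβ) ⟨ZFSet.map g β, trivial, ZFSet.map_isFunc.2 hg, by
    intro ξ hξ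
    obtain ⟨η, hη, hn⟩ := hcon ξ hξ
    refine ⟨η, hη, g η, ZFSet.mem_map.2 ⟨η, hη, rfl⟩, ?_⟩
    rcases ZFSet.IsOrdinal.mem_trichotomous (hμo.mem hξ) (hμo.mem (hg η hη)) with h | h | h
    · exact Or.inl h
    · exact Or.inr h
    · exact absurd h hn⟩
  exact ZFSet.mem_irrefl _ (this hβ)

theorem reg_limit {μ : ZFSet.{u}} (hμ : IsRegularIn Set.univ μ) {ξ : ZFSet.{u}} (hξ : ξ ∈ μ) :
    ∃ ξ' ∈ μ, ξ ∈ ξ' := by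
  obtain ⟨ξ', h, h'⟩ := reg_bound hμ (hμ.1 (ZFSet.omega_succ ZFSet.omega_zero)) (fun _ => ξ)
    (fun _ _ => hξ)
  exact ⟨ξ', h, h' ∅ (by simp)⟩

theorem surj_mk_le {f a b : ZFSet.{u}} (h : SurjFun f a b) :
    Cardinal.mk {x // x ∈ b} ≤ Cardinal.mk {x // x ∈ a} := by
  have : ∀ y : {x // x ∈ b}, ∃ x : {x // x ∈ a}, ZFSet.pair x.1 y.1 ∈ f := by
    rintro ⟨y, hy⟩
    obtain ⟨x, hx, hxy⟩ := h.2 y hy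
    exact ⟨⟨x, hx⟩, hxy⟩
  choose k hk using this
  refine Cardinal.mk_le_of_injective (f := k) ?_
  intro y y' e
  have h1 := hk y
  have h2 := hk y'
  rw [← e] at h2
  exact Subtype.ext ((h.1.2 _ (k y).2).unique h1 h2)

theorem mk_le_surj {a b : ZFSet.{u}} (h : Cardinal.mk {x // x ∈ b} ≤ Cardinal.mk {x // x ∈ a})
    (hb : ∃ y, y ∈ b) : ∃ f, SurjFun f a b := by
  classical
  obtain ⟨e⟩ := h
  obtain ⟨y0, hy0⟩ := hb
  haveI : Nonempty {x // x ∈ b} := ⟨⟨y0, hy0⟩⟩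
  let g : {x // x ∈ a} → {x // x ∈ b} := Function.invFun e
  have hg : ∀ y, g (e y) = y := Function.leftInverse_invFun e.injective
  let G : ZFSet.{u} → ZFSet.{u} := fun x => if h : x ∈ a then (g ⟨x, h⟩).1 else ∅
  letI : ZFSet.Definable₁ G := Classical.allZFSetDefinable _
  refine ⟨ZFSet.map G a, ZFSet.map_isFunc.2 ?_, ?_⟩
  · intro z hz
    simp only [G, dif_pos hz]
    exact (g _).2
  · intro y hy
    refine ⟨(e ⟨y, hy⟩).1, (e ⟨y, hy⟩).2, ZFSet.mem_map.2 ⟨_, (e ⟨y, hy⟩).2, ?_⟩⟩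
    have : G (e ⟨y, hy⟩).1 = y := by
      simp only [G, dif_pos (e ⟨y, hy⟩).2]
      rw [hg]
    rw [this]

theorem mk_le_of_mem {μ ν : ZFSet.{u}} (hμ : IsRegularIn Set.univ μ)
    (hν : CardSuccIn Set.univ μ ν) {α : ZFSet.{u}} (hα : α ∈ ν) :
    Cardinal.mk {x // x ∈ α} ≤ Cardinal.mk {x // x ∈ μ} := by
  have hνo := hν.2.1.1
  by_contra hcon
  obtain ⟨α, ⟨hα, hαc⟩, hmin⟩ := ZFSet.mem_wf.has_min
    {α : ZFSet.{u} | α ∈ ν ∧ ¬ Cardinal.mk {x // x ∈ α} ≤ Cardinal.mk {x // x ∈ μ}} ⟨α, hα, hcon⟩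
  have hαo := hνo.mem hα
  have hcard : IsCardIn Set.univ α := by
    refine ⟨hαo, fun δ hδ f _ hf => ?_⟩
    refine hmin δ ⟨hνo.mem_trans hδ hα, fun hle => ?_⟩ hδ
    exact hαc ((surj_mk_le hf).trans hle)
  have hμα : μ ∈ α := by
    rcases ZFSet.IsOrdinal.mem_or_subset hμ.2.1.1 hαo with h | h
    · exact h
    · exact absurd (Cardinal.mk_le_of_injective (f := fun x : {x // x ∈ α} =>
        (⟨x.1, h x.2⟩ : {x // x ∈ μ})) (by
          intro x y e
          exact Subtype.ext (Subtype.mk.inj e))) hαc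
  exact ZFSet.mem_irrefl _ (hν.2.2.2 α trivial hcard hμα hα)

theorem succ_bound {μ ν : ZFSet.{u}} (hμ : IsRegularIn Set.univ μ)
    (hν : CardSuccIn Set.univ μ ν) (g : ZFSet.{u} → ZFSet.{u}) (hg : ∀ ξ ∈ μ, g ξ ∈ ν) :
    ∃ e ∈ ν, ∀ ξ ∈ μ, g ξ ∈ e := by
  have hνo := hν.2.1.1
  by_contra hcon
  push Not at hcon
  have hinf : Cardinal.aleph0 ≤ Cardinal.mk {x // x ∈ μ} := by
    rw [Cardinal.aleph0_le_mk_iff]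
    by_contra hfin
    rw [not_infinite_iff_finite] at hfin
    -- the membership relation on `μ` has no maximal element
    have hwf : WellFounded (fun x y : {x // x ∈ μ} => y.1 ∈ x.1) := by
      haveI : Std.Irrefl (fun x y : {x // x ∈ μ} => y.1 ∈ x.1) := ⟨fun x => ZFSet.mem_irrefl _⟩
      haveI : IsTrans {x // x ∈ μ} (fun x y : {x // x ∈ μ} => y.1 ∈ x.1) :=
        ⟨fun x y z h1 h2 => (hμ.2.1.1.mem x.2).mem_trans h2 h1⟩
      exact Finite.wellFounded_of_trans_of_irrefl _
    obtain ⟨m, -, hm⟩ := hwf.has_min Set.univ ⟨⟨∅, hμ.1 ZFSet.omega_zero⟩, trivial⟩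
    obtain ⟨ξ', h1, h2⟩ := reg_limit hμ m.2
    exact hm ⟨ξ', h1⟩ trivial h2
  have hle : Cardinal.mk {x // x ∈ ν} ≤ Cardinal.mk {x // x ∈ μ} := by
    have hsucc : ∀ ξ : {x // x ∈ μ}, Cardinal.mk {x // x = g ξ.1 ∨ x ∈ g ξ.1} ≤
        Cardinal.mk {x // x ∈ μ} := by
      intro ξ
      have h1 : Cardinal.mk {x // x = g ξ.1 ∨ x ∈ g ξ.1} ≤
          Cardinal.mk {x // x = g ξ.1} + Cardinal.mk {x // x ∈ g ξ.1} :=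
        Cardinal.mk_union_le {x | x = g ξ.1} {x | x ∈ g ξ.1}
      refine h1.trans (Cardinal.add_le_of_le hinf ?_ (mk_le_of_mem hμ hν (hg _ ξ.2)))
      rw [Cardinal.mk_fintype, Fintype.card_unique, Nat.cast_one]
      exact Cardinal.one_le_aleph0.trans hinf
    have hsub : {x | x ∈ ν} ⊆ ⋃ ξ : {x // x ∈ μ}, {x | x = g ξ.1 ∨ x ∈ g ξ.1} := by
      intro e he
      obtain ⟨ξ, hξ, hn⟩ := hcon e he
      rw [Set.mem_iUnion]
      refine ⟨⟨ξ, hξ⟩, ?_⟩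
      rcases ZFSet.IsOrdinal.mem_trichotomous (hνo.mem he) (hνo.mem (hg ξ hξ)) with h | h | h
      · exact Or.inr h
      · exact Or.inl h
      · exact absurd h hn
    refine (Cardinal.mk_le_mk_of_subset hsub).trans ?_
    refine (Cardinal.mk_iUnion_le _).trans ?_
    refine (mul_le_mul_right (ciSup_le' hsucc) _).trans ?_
    exact (Cardinal.mul_eq_self hinf).le
  obtain ⟨f, hf⟩ := mk_le_surj hle ⟨μ, hν.2.2.1⟩
  exact hν.2.1.2 μ hν.2.2.1 f trivial hf

theorem sup_mem {γ : ZFSet.{u}} {A : Set ZFSet.{u}} (h : IsSupOf γ A) (hA : ∀ a ∈ A, a.IsOrdinal)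
    {ε : ZFSet.{u}} (hε : ε ∈ γ) : ∃ a ∈ A, ε ∈ a := by
  by_contra hcon
  push Not at hcon
  have hεo := h.1.mem hε
  have := h.2.2 ε hεo (fun a ha => (ZFSet.IsOrdinal.notMem_iff_subset hεo (hA a ha)).1 (hcon a ha))
  exact ZFSet.mem_irrefl _ (this hε)

/-- The key lemma: `π` fixes suprema of `μ`-sequences closed under `π`. -/
theorem key_fixed (μ ν M N : ZFSet.{u})
    (hμ : IsRegularIn Set.univ μ)
    (hν : CardSuccIn Set.univ μ ν)
    (hM : ModelsZFCminus M.toSet) (hN : ModelsZFCminus N.toSet)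
    (hoM : ∀ x : ZFSet, (x ∈ M ∧ x.IsOrdinal) ↔ x ∈ ν)
    (hlc : IsLargestCardIn M.toSet μ)
    (π : ZFSet → ZFSet) (hπ : IsElem M.toSet N.toSet π)
    (hcont : IsSupOf (π μ) {y | ∃ β ∈ μ, y = π β})
    (hord : ∀ α ∈ ν, (π α).IsOrdinal) (hsub : ∀ α ∈ ν, α ⊆ π α)
    (s : ZFSet.{u} → ZFSet.{u}) (hs : ∀ ξ ∈ μ, s ξ ∈ ν)
    (hinc : ∀ ξ η : ZFSet, ξ ∈ η → η ∈ μ → s ξ ∈ s η)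
    (γ : ZFSet.{u}) (hγ : γ ∈ ν) (hsup : IsSupOf γ {y | ∃ ξ ∈ μ, y = s ξ})
    (hcl : ∀ ξ ∈ μ, π (s ξ) ⊆ γ) : π γ = γ := by
  classical
  have hνo := hν.2.1.1
  have hγo := hνo.mem hγ
  have hγM : γ ∈ M := ((hoM γ).2 hγ).1
  have hνM : ∀ x ∈ ν, x ∈ M := fun x hx => ((hoM x).2 hx).1
  rcases ZFSet.IsOrdinal.mem_or_subset hγo (hord γ hγ) with hmem | h
  swap
  · exact subset_antisymm h (hsub γ hγ)
  exfalso
  obtain ⟨f, hfM, α, hαμ, hf⟩ := exists_surj hM hlc hγM hγo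
  have hμM : μ ∈ M := hlc.1
  -- surjectivity is transferred
  have h1 : ∀ δ ∈ π γ, ∃ η ∈ π μ, ZFSet.pair η δ ∈ π f := by
    have hD : DDef (fun v : Fin 3 → ZFSet.{u} => ∀ δ ∈ v 0, ∃ η ∈ v 1, ZFSet.pair η δ ∈ v 2) :=
      DDef.ball (Q := fun v δ => ∃ η ∈ v 1, ZFSet.pair η δ ∈ v 2) 0
        (DDef.bex (Q := fun v η => ZFSet.pair η (v 3) ∈ v 2) 1 (DDef.pairMem (n := 5) 4 3 2))
    refine (hD.elem hM.1 hN.1 hπ ![γ, μ, f] (by intro i; fin_cases i <;> assumption)).1 ?_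
    intro δ hδ
    obtain ⟨η, hη, hp⟩ := hf.2 δ hδ
    exact ⟨η, hαμ hη, hp⟩
  obtain ⟨η, hη, hηγ⟩ := h1 γ hmem
  obtain ⟨_, ⟨β, hβ, rfl⟩, hηβ⟩ := sup_mem hcont (by
    rintro _ ⟨β, hβ, rfl⟩
    exact hord β (hνo.mem_trans hβ hν.2.2.1)) hη
  -- boundedness on β
  have hex : ∀ η, ∃ ξ ∈ μ, ∀ δ, ZFSet.pair η δ ∈ f → δ ∈ s ξ := by
    intro η
    by_cases hηα : η ∈ α
    · obtain ⟨δ, hδ, hu⟩ := hf.1.2 η hηα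
      have hδγ : δ ∈ γ := (ZFSet.pair_mem_prod.1 (hf.1.1 hδ)).2
      obtain ⟨_, ⟨ξ, hξ, rfl⟩, hδξ⟩ := sup_mem hsup (by
        rintro _ ⟨ξ, hξ, rfl⟩
        exact hνo.mem (hs ξ hξ)) hδγ
      refine ⟨ξ, hξ, fun δ' hδ' => ?_⟩
      rw [hu δ' hδ']
      exact hδξ
    · exact ⟨∅, hμ.1 ZFSet.omega_zero, fun δ hδ =>
        absurd (ZFSet.pair_mem_prod.1 (hf.1.1 hδ)).1 hηα⟩
  choose g hgμ hg using hex
  obtain ⟨ξ, hξ, hb⟩ := reg_bound hμ hβ g (fun η _ => hgμ η)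
  have hsξ := hs ξ hξ
  have h2 : ∀ η ∈ π β, ∀ δ ∈ π γ, ZFSet.pair η δ ∈ π f → δ ∈ π (s ξ) := by
    have hD : DDef (fun v : Fin 4 → ZFSet.{u} =>
        ∀ η ∈ v 0, ∀ δ ∈ v 1, ZFSet.pair η δ ∈ v 2 → δ ∈ v 3) :=
      DDef.ball (Q := fun v η => ∀ δ ∈ v 1, ZFSet.pair η δ ∈ v 2 → δ ∈ v 3) 0
        (DDef.ball (Q := fun v δ => ZFSet.pair (v 4) δ ∈ v 2 → δ ∈ v 3) 1
          ((DDef.pairMem (n := 6) 4 5 2).imp (DDef.mem (n := 6) 5 3)))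
    have hβM : β ∈ M := hνM _ (hνo.mem_trans hβ hν.2.2.1)
    have hsM : s ξ ∈ M := hνM _ hsξ
    refine (hD.elem hM.1 hN.1 hπ ![β, γ, f, s ξ] (by intro i; fin_cases i <;> assumption)).1 ?_
    intro η hη δ hδ hp
    exact (hνo.mem hsξ).mem_trans (hg η δ hp) (hinc _ _ (hb η hη) hξ)
  exact ZFSet.mem_irrefl _ (hcl ξ hξ (h2 η hηβ γ hmem hηγ))

open Classical in
/-- The closing-off sequence. -/
noncomputable def closeSeq (ν β : ZFSet.{u}) (π : ZFSet.{u} → ZFSet.{u}) : ZFSet.{u} → ZFSet.{u} :=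
  ZFSet.mem_wf.fix fun ξ ih =>
    if h : ∃ e ∈ ν, β ∈ e ∧ ∀ η (hη : η ∈ ξ), π (ih η hη) ∈ e then h.choose else ∅

theorem closeSeq_spec {ν β : ZFSet.{u}} {π : ZFSet.{u} → ZFSet.{u}} {ξ : ZFSet.{u}}
    (h : ∃ e ∈ ν, β ∈ e ∧ ∀ η ∈ ξ, π (closeSeq ν β π η) ∈ e) :
    closeSeq ν β π ξ ∈ ν ∧ β ∈ closeSeq ν β π ξ ∧
      ∀ η ∈ ξ, π (closeSeq ν β π η) ∈ closeSeq ν β π ξ := by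
  have e : closeSeq ν β π ξ = h.choose := by
    conv_lhs => rw [closeSeq, WellFounded.fix_eq]
    exact dif_pos h
  have := h.choose_spec
  rw [← e] at this
  exact this

/-- Let `μ` be a regular cardinal and `M, N` transitive models of ZFC⁻ with
`o(M) = o(N) = μ⁺` and `μ` the largest cardinal of `M`.  If `π : M → N` is elementary and
continuous at `μ`, then the set of fixed points of `π` belongs to the `μ`-club filter on `μ⁺`. -/
theorem fixed_points_mu_club (μ ν M N : ZFSet)
    (hμ : IsRegularIn Set.univ μ)
    (hν : CardSuccIn Set.univ μ ν)
    (hM : ModelsZFCminus M.toSet) (hN : ModelsZFCminus N.toSet)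
    (hoM : ∀ x : ZFSet, (x ∈ M ∧ x.IsOrdinal) ↔ x ∈ ν)
    (hoN : ∀ x : ZFSet, (x ∈ N ∧ x.IsOrdinal) ↔ x ∈ ν)
    (hlc : IsLargestCardIn M.toSet μ)
    (π : ZFSet → ZFSet) (hπ : IsElem M.toSet N.toSet π)
    (hcont : IsSupOf (π μ) {y | ∃ β ∈ μ, y = π β}) :
    {α : ZFSet | α ∈ ν ∧ π α = α} ∈ muClubFilter μ ν := by
  classical
  have hνo := hν.2.1.1
  have hνM : ∀ x ∈ ν, x ∈ M := fun x hx => ((hoM x).2 hx).1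
  have hord : ∀ α ∈ ν, (π α).IsOrdinal := by
    intro α hα
    exact (DDef.isOrdinal.elem hM.1 hN.1 hπ ![α] (by
      intro i; fin_cases i; exact hνM α hα)).1 (hνo.mem hα)
  have hπν : ∀ α ∈ ν, π α ∈ ν := fun α hα =>
    (hoN _).1 ⟨hπ.1 _ (hνM α hα), hord α hα⟩
  have hmem : ∀ α ∈ ν, ∀ x ∈ α, π x ∈ π α := by
    intro α hα x hx
    have hαM : α ∈ M := hνM α hα
    have hxM : x ∈ M := hνM x (hνo.mem_trans hx hα)
    exact ((DDef.mem (n := 2) 0 1).elem hM.1 hN.1 hπ ![x, α] (by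
      intro i; fin_cases i <;> assumption)).1 hx
  have hsub : ∀ α ∈ ν, α ⊆ π α := by
    intro α
    refine ZFSet.inductionOn α fun α ih hα x hx => ?_
    have hxν := hνo.mem_trans hx hα
    exact ZFSet.IsOrdinal.mem_of_subset_of_mem (hνo.mem hxν) (hord α hα) (ih x hx hxν)
      (hmem α hα x hx)
  refine Filter.mem_generate_of_mem ?_
  refine ⟨fun x hx => hx.1, ?_, ?_⟩
  · intro β hβ
    let s := closeSeq ν β π
    have hspec : ∀ ξ ∈ μ, s ξ ∈ ν ∧ β ∈ s ξ ∧ ∀ η ∈ ξ, π (s η) ∈ s ξ := by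
      intro ξ
      refine ZFSet.inductionOn ξ fun ξ ih hξ => ?_
      refine closeSeq_spec ?_
      have hξsub := hμ.2.1.1.subset_of_mem hξ
      let g : ZFSet → ZFSet := fun η => if η ∈ ξ then π (s η) else β
      obtain ⟨e, he, hge⟩ := succ_bound hμ hν g (by
        intro η hη
        by_cases h : η ∈ ξ
        · simp only [g, if_pos h]
          exact hπν _ (ih η h hη).1
        · simpa only [g, if_neg h] using hβ)
      refine ⟨e, he, ?_, ?_⟩
      · have := hge ξ hξ
        simpa only [g, if_neg (ZFSet.mem_irrefl ξ)] using this
      · intro η hη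
        have := hge η (hξsub hη)
        simpa only [g, if_pos hη] using this
    have hs : ∀ ξ ∈ μ, s ξ ∈ ν := fun ξ hξ => (hspec ξ hξ).1
    have hinc : ∀ ξ η : ZFSet, ξ ∈ η → η ∈ μ → s ξ ∈ s η := by
      intro ξ η hξη hη
      have hsξ := hs ξ (hμ.2.1.1.mem_trans hξη hη)
      exact ZFSet.IsOrdinal.mem_of_subset_of_mem (hνo.mem hsξ) (hνo.mem (hs η hη)) (hsub _ hsξ)
        ((hspec η hη).2.2 ξ hξη)
    obtain ⟨e, he, hse⟩ := succ_bound hμ hν s hs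
    -- the supremum
    obtain ⟨γ, ⟨hγν, hγub⟩, hγmin⟩ := ZFSet.mem_wf.has_min
      {γ : ZFSet | γ ∈ ν ∧ ∀ ξ ∈ μ, s ξ ⊆ γ}
      ⟨e, he, fun ξ hξ => (hνo.mem he).subset_of_mem (hse ξ hξ)⟩
    have hsup : IsSupOf γ {y | ∃ ξ ∈ μ, y = s ξ} := by
      refine ⟨hνo.mem hγν, ?_, ?_⟩
      · rintro _ ⟨ξ, hξ, rfl⟩
        exact hγub ξ hξ
      · intro δ hδ hub
        rcases ZFSet.IsOrdinal.mem_or_subset hδ (hνo.mem hγν) with h | h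
        · exact absurd h (hγmin δ ⟨hνo.mem_trans h hγν, fun ξ hξ => hub _ ⟨ξ, hξ, rfl⟩⟩)
        · exact h
    have hfix := key_fixed μ ν M N hμ hν hM hN hoM hlc π hπ hcont hord hsub s hs hinc γ hγν hsup
      (by
        intro ξ hξ
        obtain ⟨ξ', hξ', hlt⟩ := reg_limit hμ hξ
        exact (hνo.mem hγν).subset_of_mem (hγub ξ' hξ' ((hspec ξ' hξ').2.2 ξ hlt)))
    refine ⟨γ, ⟨hγν, hfix⟩, Or.inl ?_⟩
    have h0 := hμ.1 ZFSet.omega_zero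
    exact hγub ∅ h0 (hspec ∅ h0).2.1
  · intro s hs hinc γ hγ hsup
    refine ⟨hγ, key_fixed μ ν M N hμ hν hM hN hoM hlc π hπ hcont hord hsub s
      (fun ξ hξ => (hs ξ hξ).1) hinc γ hγ hsup ?_⟩
    intro ξ hξ
    rw [(hs ξ hξ).2]
    exact hsup.2.1 _ ⟨ξ, hξ, rfl⟩
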